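/- lim_{N→∞} Σ_{n=−N+1}^{N−1} Σ_{m∈ℤ} (−1)^{m+n} / ((4m)² + 7(4n+1)²) = (π/(4√14)) · log( (1 + (√2 − 1)√(2√2 − √7)) / (1 − (√2 − 1)√(2√2 − √7)) ). -/

import Mathlib

open Filter

lemma hs_conv {ι E : Type*} [AddCommMonoid E] [TopologicalSpace E] {f g : ι → E} {a b : E}
    (h : HasSum f a) (h1 : ∀ i, g i = f i) (h2 : b = a) : HasSum g b := by
  rw [h2, funext h1]; exact h

lemma hs_cot (b : ℝ) (hb : 0 < b) :
    HasSum (fun m : ℤ => 1 / ((m : ℝ) ^ 2 + b ^ 2)) (Real.pi * Real.cosh (Real.pi * b) / (b * Real.sinh (Real.pi * b))) := by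
  have hx : (Complex.I * b : ℂ) ∈ Complex.integerComplement := by
    rintro ⟨n, hn⟩
    have := congrArg Complex.im hn
    simp at this
    exact hb.ne this
  have h1 := cot_series_rep' hx
  have h2 := (Summable.hasSum (summable_cotTerm hx))
  have h3 : ∀ n : ℕ, (1 / (Complex.I * b - (n + 1)) + 1 / (Complex.I * b + (n + 1)) : ℂ) = (-2 * Complex.I * b) * ((1 / (((n + 1 : ℤ) : ℝ) ^ 2 + b ^ 2) : ℝ) : ℂ) := by
    intro n
    have a1 : (Complex.I * b - (n + 1) : ℂ) ≠ 0 := by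
      intro h
      have := congrArg Complex.im h
      simp at this
      exact hb.ne' this
    have a2 : (Complex.I * b + (n + 1) : ℂ) ≠ 0 := by
      intro h
      have := congrArg Complex.im h
      simp at this
      exact hb.ne' this
    have a4 : (((n : ℝ) + 1) ^ 2 + b ^ 2 : ℝ) ≠ 0 := by positivity
    have a3 : (((n : ℂ) + 1) ^ 2 + b ^ 2 : ℂ) ≠ 0 := by exact_mod_cast a4
    push_cast
    field_simp
    ring_nf
    simp only [Complex.I_sq, Complex.I_pow_three]
    ring
  have h4 : (Real.pi * Complex.cot (Real.pi * (Complex.I * b)) - 1 / (Complex.I * b) : ℂ) =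
      (-2 * Complex.I * b) * ((Real.pi * Real.cosh (Real.pi * b) / (b * Real.sinh (Real.pi * b)) - 1 / b ^ 2) / 2 : ℝ) := by
    have s0 : Real.sinh (Real.pi * b) ≠ 0 := by
      have := Real.sinh_pos_iff.mpr (mul_pos Real.pi_pos hb)
      exact this.ne'
    have s1 : Complex.sinh (Real.pi * b) ≠ 0 := by
      rw [← Complex.ofReal_mul, ← Complex.ofReal_sinh]; exact_mod_cast s0
    have b0 : (b : ℂ) ≠ 0 := by exact_mod_cast hb.ne'
    have e1 : (Real.pi * (Complex.I * b) : ℂ) = (Real.pi * b) * Complex.I := by ring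
    rw [e1, Complex.cot, Complex.cos_mul_I, Complex.sin_mul_I]
    push_cast
    field_simp
    ring_nf
    simp only [Complex.I_sq]
    ring
  simp only [cotTerm] at h2
  rw [← h1, h4] at h2
  simp only [h3] at h2
  have i0 : (-2 * Complex.I * b : ℂ) ≠ 0 := by
    simp [hb.ne']
  rw [hasSum_mul_left_iff i0, Complex.hasSum_ofReal] at h2
  have h5 := HasSum.of_add_one_of_neg_add_one (f := fun m : ℤ => 1 / ((m : ℝ) ^ 2 + b ^ 2)) (by simpa using h2) (by
    convert h2 using 2 with n
    push_cast
    ring)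
  convert h5 using 1
  simp
  ring

lemma hs_alt (b : ℝ) (hb : 0 < b) :
    HasSum (fun m : ℤ => (-1 : ℝ) ^ m / ((m : ℝ) ^ 2 + b ^ 2)) (Real.pi / (b * Real.sinh (Real.pi * b))) := by
  have h1 := hs_cot b hb
  have h2 := hs_cot (b / 2) (by positivity)
  have hinj : Function.Injective (fun m : ℤ => 2 * m) := fun a b h => by simpa using h
  have h3 : HasSum (fun m : ℤ => if Even m then 1 / ((m : ℝ) ^ 2 + b ^ 2) else 0)
      ((1 / 4) * (Real.pi * Real.cosh (Real.pi * (b / 2)) / ((b / 2) * Real.sinh (Real.pi * (b / 2))))) := by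
    rw [← hinj.hasSum_iff]
    · refine hs_conv (h2.mul_left (1 / 4)) (fun m => ?_) rfl
      simp only [Function.comp, even_two, Even.mul_right, if_true]
      push_cast
      rw [show (2 * (m : ℝ)) ^ 2 + b ^ 2 = 4 * ((m : ℝ) ^ 2 + (b / 2) ^ 2) by ring]
      field_simp
    · intro x hx
      rw [if_neg]
      rintro ⟨r, hr⟩
      exact hx ⟨r, by simp; omega⟩
  have h4 := (h3.mul_left 2).sub h1
  refine hs_conv h4 (fun m => ?_) ?_
  · rcases Int.even_or_odd m with h | h
    · rw [h.neg_one_zpow, if_pos h]; ring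
    · rw [h.neg_one_zpow, if_neg (by simpa using h)]; ring
  · have : Real.pi * b = 2 * (Real.pi * (b / 2)) := by ring
    rw [this, Real.sinh_two_mul, Real.cosh_two_mul]
    have s0 : 0 < Real.sinh (Real.pi * (b / 2)) := Real.sinh_pos_iff.mpr (by positivity)
    have c0 : 0 < Real.cosh (Real.pi * (b / 2)) := Real.cosh_pos _
    field_simp
    rw [Real.cosh_sq]
    ring
 
lemma inner_sum_eq (n : ℤ) :
    ∑' m : ℤ, (-1 : ℝ) ^ (m + n) / ((4 * (m : ℝ)) ^ 2 + 7 * (4 * (n : ℝ) + 1) ^ 2)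
     = Real.pi / (4 * √7) * ((-1) ^ n / (((4 * n + 1 : ℤ).natAbs : ℝ) * Real.sinh (Real.pi * √7 / 4 * ((4 * n + 1 : ℤ).natAbs : ℝ)))) := by
  set s : ℝ := ((4 * n + 1 : ℤ).natAbs : ℝ) with hs
  have hs0 : 0 < s := by
    rw [hs]; norm_cast; omega
  have hsq : (4 * (n : ℝ) + 1) ^ 2 = s ^ 2 := by
    rw [hs, Nat.cast_natAbs]
    push_cast
    rw [sq_abs]
  have h := (hs_alt (√7 / 4 * s) (by positivity)).mul_left ((-1 : ℝ) ^ n / 16)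
  refine (tsum_congr (fun m => ?_)).trans (h.tsum_eq.trans ?_)
  · rw [hsq, zpow_add₀ (by norm_num)]
    have h7 : √7 ^ 2 = 7 := by norm_num
    rw [show (4 * (m : ℝ)) ^ 2 + 7 * s ^ 2 = 16 * ((m : ℝ) ^ 2 + (√7 / 4 * s) ^ 2) by
      linear_combination (-(s ^ 2)) * h7]
    field_simp
  · rw [show Real.pi * (√7 / 4 * s) = Real.pi * √7 / 4 * s by ring]
    have s0 : 0 < Real.sinh (Real.pi * √7 / 4 * s) := Real.sinh_pos_iff.mpr (by positivity)
    field_simp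
    norm_num
noncomputable def rqf (p : ℂ) (a : ℤ) : ℂ :=
  if a < 0 then 0 else (∏ i ∈ Finset.range a.toNat, (1 - p ^ (i + 1)))⁻¹

lemma one_sub_pow_ne {p : ℂ} (hp : ‖p‖ < 1) (i : ℕ) : 1 - p ^ (i + 1) ≠ 0 := by
  intro h
  have : ‖p ^ (i + 1)‖ < 1 := by
    rw [norm_pow]; exact pow_lt_one₀ (norm_nonneg _) hp (by omega)
  rw [← sub_eq_zero.mp h] at this
  simp at this

lemma rqf_rec {p : ℂ} (hp : ‖p‖ < 1) (a : ℤ) : rqf p a = (1 - p ^ (a + 1)) * rqf p (a + 1) := by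
  unfold rqf
  rcases lt_trichotomy a (-1) with h | h | h
  · rw [if_pos (by omega), if_pos (by omega), mul_zero]
  · subst h; simp
  · rw [if_neg (by omega), if_neg (by omega)]
    obtain ⟨n, rfl⟩ := Int.eq_ofNat_of_zero_le (show 0 ≤ a by omega)
    have h1 : ((n : ℤ) + 1).toNat = n + 1 := by omega
    have h2 : (p ^ ((n : ℤ) + 1) : ℂ) = p ^ (n + 1) := by norm_cast
    rw [h1, h2, Finset.prod_range_succ, mul_inv]
    have := one_sub_pow_ne hp n
    simp only [Int.toNat_natCast]
    field_simp

lemma theta_term_succ (n : ℤ) (z τ : ℂ) : jacobiTheta₂_term (n + 1) z τ =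
    jacobiTheta₂_term n z τ * (Complex.exp (2 * Real.pi * Complex.I * z) * (Complex.exp (Real.pi * Complex.I * τ) * Complex.exp (2 * Real.pi * Complex.I * τ) ^ n)) := by
  rw [← Complex.exp_int_mul]
  simp only [jacobiTheta₂_term, ← Complex.exp_add]
  congr 1
  push_cast
  ring

lemma theta_term_pred (n : ℤ) (z τ : ℂ) : jacobiTheta₂_term (n - 1) z τ =
    jacobiTheta₂_term n z τ * (Complex.exp (2 * Real.pi * Complex.I * z))⁻¹ * (Complex.exp (Real.pi * Complex.I * τ) * Complex.exp (2 * Real.pi * Complex.I * τ) ^ (-n)) := by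
  rw [← Complex.exp_int_mul, ← Complex.exp_neg]
  simp only [jacobiTheta₂_term, ← Complex.exp_add]
  congr 1
  push_cast
  ring

lemma finite_triple (z τ : ℂ) (K : ℕ) (q p x : ℂ)
    (hq : q = Complex.exp (Real.pi * Complex.I * τ)) (hp : p = Complex.exp (2 * Real.pi * Complex.I * τ))
    (hx : x = Complex.exp (2 * Real.pi * Complex.I * z)) (hp1 : ‖p‖ < 1) :
    HasSum (fun n : ℤ => (∏ i ∈ Finset.range (2 * K), (1 - p ^ (i + 1))) * (rqf p (K + n) * rqf p (K - n)) * jacobiTheta₂_term n z τ)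
      (∏ k ∈ Finset.range K, ((1 + x * q ^ (2 * k + 1)) * (1 + x⁻¹ * q ^ (2 * k + 1)))) := by
  induction K with
  | zero =>
    convert hasSum_single (0 : ℤ) ?_ using 1
    · simp [rqf, jacobiTheta₂_term]
    · intro n hn
      rcases lt_or_gt_of_ne hn with h | h
      · have : rqf p (((0 : ℕ) : ℤ) + n) = 0 := by simp [rqf, h]
        rw [this]; simp
      · have : rqf p (((0 : ℕ) : ℤ) - n) = 0 := by simp [rqf, h]
        rw [this]; simp
  | succ K ih =>
    rw [Finset.prod_range_succ]
    have x0 : x ≠ 0 := by rw [hx]; exact Complex.exp_ne_zero _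
    have q0 : q ≠ 0 := by rw [hq]; exact Complex.exp_ne_zero _
    have p0 : p ≠ 0 := by rw [hp]; exact Complex.exp_ne_zero _
    have pq : p = q ^ 2 := by
      rw [hp, hq, ← Complex.exp_nat_mul]; congr 1; push_cast; ring
    have ihm := (Equiv.subRight (1 : ℤ)).hasSum_iff.mpr ih
    have ihp := (Equiv.addRight (1 : ℤ)).hasSum_iff.mpr ih
    have key := ((ih.mul_left (1 + p ^ (2 * K + 1))).add (ihm.mul_left (x * q ^ (2 * K + 1)))).add
      (ihp.mul_left (x⁻¹ * q ^ (2 * K + 1)))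
    refine hs_conv key (fun n => ?_) ?_
    · simp only [Function.comp, Equiv.subRight_apply, Equiv.coe_addRight]
      rw [theta_term_succ, theta_term_pred, ← hx, ← hp, ← hq]
      rw [show 2 * (K + 1) = 2 * K + 1 + 1 by ring, Finset.prod_range_succ, Finset.prod_range_succ]
      rw [show ((K : ℤ) + (n - 1)) = K + n - 1 by ring, show ((K : ℤ) - (n + 1)) = K - n - 1 by ring,
        show ((K : ℤ) - (n - 1)) = K - n + 1 by ring, show ((K : ℤ) + (n + 1)) = K + n + 1 by ring]
      rw [rqf_rec hp1 ((K : ℤ) + n - 1), rqf_rec hp1 ((K : ℤ) - n - 1), sub_add_cancel, sub_add_cancel]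
      rw [rqf_rec hp1 ((K : ℤ) + n), rqf_rec hp1 ((K : ℤ) - n)]
      rw [show (((K + 1 : ℕ) : ℤ) + n) = K + n + 1 by push_cast; ring, show (((K + 1 : ℕ) : ℤ) - n) = K - n + 1 by push_cast; ring]
      have e1 : p ^ (2 * K + 1) = p * p ^ ((K : ℤ) + n) * p ^ ((K : ℤ) - n) := by
        rw [mul_assoc, ← zpow_add₀ p0, show (K : ℤ) + n + (K - n) = ((2 * K : ℕ) : ℤ) by push_cast; ring, zpow_natCast]; ring
      have e2 : p ^ (2 * K + 1 + 1) = p ^ 2 * p ^ ((K : ℤ) + n) * p ^ ((K : ℤ) - n) := by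
        rw [pow_succ, e1]; ring
      have e3 : q ^ (2 * K + 1) * (q * p ^ (-n)) = p * p ^ ((K : ℤ) - n) := by
        rw [sub_eq_add_neg, zpow_add₀ p0, zpow_natCast, pq, pow_succ, pow_mul]; ring
      have e4 : q ^ (2 * K + 1) * (q * p ^ n) = p * p ^ ((K : ℤ) + n) := by
        rw [zpow_add₀ p0, zpow_natCast, pq, pow_succ, pow_mul]; ring
      have e5 : p ^ ((K : ℤ) + n + 1) = p * p ^ ((K : ℤ) + n) := by rw [zpow_add_one₀ p0]; ring
      have e6 : p ^ ((K : ℤ) - n + 1) = p * p ^ ((K : ℤ) - n) := by rw [zpow_add_one₀ p0]; ring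
      rw [e5, e6, e1, e2]
      generalize jacobiTheta₂_term n z τ = J
      generalize rqf p (K + n + 1) = X
      generalize rqf p (K - n + 1) = Y
      generalize (∏ i ∈ Finset.range (2 * K), (1 - p ^ (i + 1))) = C
      generalize p ^ ((K : ℤ) + n) = A at *
      generalize p ^ ((K : ℤ) - n) = B at *
      generalize q ^ (2 * K + 1) = D at *
      have f1 : ∀ U V : ℂ, x * D * (U * (V * x⁻¹ * (q * p ^ (-n)))) = U * V * (p * B) := by
        intro U V; rw [← e3]; field_simp
      have f2 : ∀ U V : ℂ, x⁻¹ * D * (U * (V * (x * (q * p ^ n)))) = U * V * (p * A) := by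
        intro U V; rw [← e4]; field_simp
      rw [f1, f2]
      ring
    · rw [show p ^ (2 * K + 1) = q ^ (2 * K + 1) * q ^ (2 * K + 1) by rw [pq]; ring]
      field_simp
      ring

lemma tendsto_triple (τ : ℂ) (hτ : 0 < τ.im) : ∃ c : ℂ, c ≠ 0 ∧ ∀ z : ℂ,
    Tendsto (fun K : ℕ => ∏ k ∈ Finset.range K, ((1 + Complex.exp (2 * Real.pi * Complex.I * z) * Complex.exp (Real.pi * Complex.I * τ) ^ (2 * k + 1)) * (1 + (Complex.exp (2 * Real.pi * Complex.I * z))⁻¹ * Complex.exp (Real.pi * Complex.I * τ) ^ (2 * k + 1))))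
      atTop (nhds (c * jacobiTheta₂ z τ)) := by
  set p := Complex.exp (2 * Real.pi * Complex.I * τ) with hp
  have hp1 : ‖p‖ < 1 := by
    rw [hp, Complex.norm_exp, Real.exp_lt_one_iff]
    simp
    positivity
  set L : ℂ := ∏' i : ℕ, (1 - p ^ (i + 1)) with hL
  have hm := ModularForm.multipliable_one_sub_pow hp1
  have hsum : Summable (fun i : ℕ => ‖-p ^ (i + 1)‖) := by
    simp only [norm_neg, norm_pow]
    exact (summable_nat_add_iff 1).mpr (summable_geometric_of_lt_one (norm_nonneg _) hp1)
  have hL0 : L ≠ 0 := by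
    have := tprod_one_add_ne_zero_of_summable (f := fun n : ℕ => -p ^ (n + 1)) (fun i => by
      simpa [sub_eq_add_neg] using one_sub_pow_ne hp1 i) hsum
    simpa [hL, sub_eq_add_neg] using this
  have t1 : Tendsto (fun K : ℕ => ∏ i ∈ Finset.range K, (1 - p ^ (i + 1))) atTop (nhds L) :=
    hm.hasProd.tendsto_prod_nat
  have t2 : Tendsto (fun K : ℕ => (∏ i ∈ Finset.range K, (1 - p ^ (i + 1)))⁻¹) atTop (nhds L⁻¹) :=
    t1.inv₀ hL0
  obtain ⟨M1, hM1⟩ := (Metric.isBounded_range_of_tendsto _ t1).exists_norm_le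
  obtain ⟨M2, hM2⟩ := (Metric.isBounded_range_of_tendsto _ t2).exists_norm_le
  have b1 : ∀ K : ℕ, ‖∏ i ∈ Finset.range K, (1 - p ^ (i + 1))‖ ≤ M1 := fun K => hM1 _ ⟨K, rfl⟩
  have b2 : ∀ a : ℤ, ‖rqf p a‖ ≤ M2 := by
    intro a
    have h0 := hM2 _ ⟨a.toNat, rfl⟩
    unfold rqf
    split_ifs
    · rw [norm_zero]; exact (norm_nonneg _).trans h0
    · exact h0
  have M10 : 0 ≤ M1 := (norm_nonneg _).trans (b1 0)
  have M20 : 0 ≤ M2 := (norm_nonneg _).trans (b2 0)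
  have t3 : ∀ u : ℕ → ℤ, Tendsto u atTop atTop → Tendsto (fun K : ℕ => rqf p (u K)) atTop (nhds L⁻¹) := by
    intro u hu
    have hu' : Tendsto (fun K => (u K).toNat) atTop atTop := by
      rw [tendsto_atTop] at hu ⊢
      intro b
      filter_upwards [hu b] with K hK
      omega
    refine (t2.comp hu').congr' ?_
    filter_upwards [hu.eventually_ge_atTop 0] with K hK
    simp only [rqf, Function.comp]
    rw [if_neg (by omega)]
  refine ⟨L * (L⁻¹ * L⁻¹), by simp [hL0], fun z => ?_⟩
  have hfin := fun K : ℕ => (finite_triple z τ K _ p _ rfl hp rfl hp1).tsum_eq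
  simp only [← hfin]
  have := tendsto_tsum_of_dominated_convergence (𝓕 := atTop) (bound := fun n : ℤ => M1 * (M2 * M2) * ‖jacobiTheta₂_term n z τ‖)
    (f := fun (K : ℕ) (n : ℤ) => (∏ i ∈ Finset.range (2 * K), (1 - p ^ (i + 1))) * (rqf p (K + n) * rqf p (K - n)) * jacobiTheta₂_term n z τ)
    (g := fun n : ℤ => L * (L⁻¹ * L⁻¹) * jacobiTheta₂_term n z τ)
    (((summable_jacobiTheta₂_term_iff z τ).mpr hτ).norm.mul_left _)
    (by
      intro n
      refine Tendsto.mul_const _ (Tendsto.mul (t1.comp (tendsto_id.const_mul_atTop' (by norm_num : 0 < 2))) (Tendsto.mul (t3 _ ?_) (t3 _ ?_)))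
      · exact tendsto_atTop_add_const_right _ _ tendsto_natCast_atTop_atTop
      · exact tendsto_atTop_add_const_right _ _ tendsto_natCast_atTop_atTop)
    (Eventually.of_forall (by
      intro K n
      rw [norm_mul, norm_mul, norm_mul]
      gcongr
      · exact b1 _
      · exact b2 _
      · exact b2 _))
  rw [tsum_mul_left] at this
  exact this

def pairSplit : (ℤ × ℤ) ⊕ (ℤ × ℤ) ≃ ℤ × ℤ where
  toFun
    | Sum.inl (a, b) => (a + b, a - b)
    | Sum.inr (a, b) => (a + b + 1, a - b)
  invFun x := if (x.1 + x.2) % 2 = 0 then Sum.inl ((x.1 + x.2) / 2, (x.1 - x.2) / 2)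
    else Sum.inr ((x.1 + x.2 - 1) / 2, (x.1 - x.2 - 1) / 2)
  left_inv := by
    rintro (⟨a, b⟩ | ⟨a, b⟩)
    · have : (a + b + (a - b)) % 2 = 0 := by omega
      simp only [this, if_true]
      congr 2 <;> omega
    · have : ¬ (a + b + 1 + (a - b)) % 2 = 0 := by omega
      simp only [this, if_false]
      congr 2 <;> omega
  right_inv := by
    rintro ⟨m, n⟩
    by_cases h : (m + n) % 2 = 0
    · simp only [h, if_true]
      ext <;> simp <;> omega
    · simp only [h, if_false]
      ext <;> simp <;> omega

lemma hasSum_prod_aux (f g : ℤ → ℂ) (a b : ℂ) (hf : HasSum f a) (hg : HasSum g b) :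
    HasSum (fun x : ℤ × ℤ => f x.1 * g x.2) (a * b) := by
  have h := summable_mul_of_summable_norm hf.summable.norm hg.summable.norm
  have h2 := tsum_mul_tsum_of_summable_norm hf.summable.norm hg.summable.norm
  rw [hf.tsum_eq, hg.tsum_eq] at h2
  rw [h2]
  exact h.hasSum

lemma hasSum_theta_prod (z w τ : ℂ) (hτ : 0 < τ.im) :
    HasSum (fun x : ℤ × ℤ => jacobiTheta₂_term x.1 z τ * jacobiTheta₂_term x.2 w τ)
      (jacobiTheta₂ z τ * jacobiTheta₂ w τ) := by
  have h1 := hasSum_jacobiTheta₂_term z hτ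
  have h2 := hasSum_jacobiTheta₂_term w hτ
  have := hasSum_prod_aux (fun n => jacobiTheta₂_term n z τ) (fun n => jacobiTheta₂_term n w τ) _ _ h1 h2
  exact this

lemma theta_mul (z w τ : ℂ) (hτ : 0 < τ.im) :
    jacobiTheta₂ z τ * jacobiTheta₂ w τ =
      jacobiTheta₂ (z + w) (2 * τ) * jacobiTheta₂ (z - w) (2 * τ) +
      Complex.exp (2 * Real.pi * Complex.I * z + Real.pi * Complex.I * τ) *
        (jacobiTheta₂ (z + w + τ) (2 * τ) * jacobiTheta₂ (z - w + τ) (2 * τ)) := by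
  have hτ2 : 0 < (2 * τ).im := by simpa using hτ
  have h := (pairSplit.hasSum_iff).mpr (hasSum_theta_prod z w τ hτ)
  have h1 := hasSum_theta_prod (z + w) (z - w) (2 * τ) hτ2
  have h2 := (hasSum_theta_prod (z + w + τ) (z - w + τ) (2 * τ) hτ2).mul_left
    (Complex.exp (2 * Real.pi * Complex.I * z + Real.pi * Complex.I * τ))
  refine h.unique (HasSum.sum (hs_conv h1 ?_ rfl) (hs_conv h2 ?_ rfl))
  · rintro ⟨a, b⟩
    simp only [Function.comp, pairSplit, Equiv.coe_fn_mk, jacobiTheta₂_term, ← Complex.exp_add]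
    congr 1
    push_cast
    ring
  · rintro ⟨a, b⟩
    simp only [Function.comp, pairSplit, Equiv.coe_fn_mk, jacobiTheta₂_term, ← Complex.exp_add]
    congr 1
    push_cast
    ring

def intSplit : ℤ ⊕ ℤ ≃ ℤ where
  toFun
    | Sum.inl a => 2 * a
    | Sum.inr a => 2 * a + 1
  invFun x := if x % 2 = 0 then Sum.inl (x / 2) else Sum.inr ((x - 1) / 2)
  left_inv := by
    rintro (a | a)
    · have : (2 * a) % 2 = 0 := by omega
      simp only [this, if_true]
      congr 1; omega
    · have : ¬ (2 * a + 1) % 2 = 0 := by omega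
      simp only [this, if_false]
      congr 1; omega
  right_inv := by
    intro m
    by_cases h : m % 2 = 0
    · simp only [h, if_true]; omega
    · simp only [h, if_false]; omega

lemma theta_split (z τ : ℂ) (hτ : 0 < τ.im) :
    jacobiTheta₂ z τ = jacobiTheta₂ (2 * z) (4 * τ) +
      Complex.exp (2 * Real.pi * Complex.I * z + Real.pi * Complex.I * τ) * jacobiTheta₂ (2 * z + 2 * τ) (4 * τ) := by
  have hτ2 : 0 < (4 * τ).im := by simpa using hτ
  have h := (intSplit.hasSum_iff).mpr (hasSum_jacobiTheta₂_term z hτ)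
  have h1 := hasSum_jacobiTheta₂_term (2 * z) hτ2
  have h2 := (hasSum_jacobiTheta₂_term (2 * z + 2 * τ) hτ2).mul_left
    (Complex.exp (2 * Real.pi * Complex.I * z + Real.pi * Complex.I * τ))
  refine h.unique (HasSum.sum (hs_conv h1 ?_ rfl) (hs_conv h2 ?_ rfl))
  · intro a
    simp only [Function.comp, intSplit, Equiv.coe_fn_mk, jacobiTheta₂_term, ← Complex.exp_add]
    congr 1
    push_cast
    ring
  · intro a
    simp only [Function.comp, intSplit, Equiv.coe_fn_mk, jacobiTheta₂_term, ← Complex.exp_add]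
    congr 1
    push_cast
    ring

lemma theta_zero (τ : ℂ) : jacobiTheta₂ (1 / 2 + τ) (2 * τ) = 0 := by
  have h1 : jacobiTheta₂ (1 / 2 + τ) (2 * τ) = jacobiTheta₂ (1 / 2 - τ) (2 * τ) := by
    rw [← jacobiTheta₂_neg_left, ← jacobiTheta₂_add_left]
    congr 1; ring
  have h2 := jacobiTheta₂_add_left' (1 / 2 - τ) (2 * τ)
  have h3 : Complex.exp (-Real.pi * Complex.I * (2 * τ + 2 * (1 / 2 - τ))) = -1 := by
    rw [← Complex.exp_neg_pi_mul_I]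
    congr 1; ring
  rw [h3, show (1 / 2 - τ + 2 * τ : ℂ) = 1 / 2 + τ by ring, ← h1] at h2
  linear_combination (1 / 2 : ℂ) * h2

lemma half_add_one (τ : ℂ) : jacobiTheta₂ (1 / 2) τ = jacobiTheta₂ (-1 / 2) τ := by
  rw [← jacobiTheta₂_neg_left]
  congr 1; ring

lemma th3_sq (τ : ℂ) (hτ : 0 < τ.im) : jacobiTheta₂ 0 τ ^ 2 = jacobiTheta₂ 0 (2 * τ) ^ 2 +
    Complex.exp (Real.pi * Complex.I * τ) * jacobiTheta₂ τ (2 * τ) ^ 2 := by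
  have := theta_mul 0 0 τ hτ
  simp only [add_zero, sub_zero, mul_zero, zero_add] at this
  linear_combination this

lemma th4_sq (τ : ℂ) (hτ : 0 < τ.im) : jacobiTheta₂ (1 / 2) τ ^ 2 = jacobiTheta₂ 0 (2 * τ) ^ 2 -
    Complex.exp (Real.pi * Complex.I * τ) * jacobiTheta₂ τ (2 * τ) ^ 2 := by
  have := theta_mul (1 / 2) (1 / 2) τ hτ
  have e1 : jacobiTheta₂ (1 / 2 + 1 / 2) (2 * τ) = jacobiTheta₂ 0 (2 * τ) := by
    rw [← jacobiTheta₂_add_left 0]; congr 1; norm_num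
  have e2 : jacobiTheta₂ (1 / 2 + 1 / 2 + τ) (2 * τ) = jacobiTheta₂ τ (2 * τ) := by
    rw [← jacobiTheta₂_add_left τ]; congr 1; ring
  have e3 : Complex.exp (2 * Real.pi * Complex.I * (1 / 2) + Real.pi * Complex.I * τ) = - Complex.exp (Real.pi * Complex.I * τ) := by
    rw [Complex.exp_add, show (2 * Real.pi * Complex.I * (1 / 2) : ℂ) = Real.pi * Complex.I by ring, Complex.exp_pi_mul_I]; ring
  rw [e1, e2, e3, sub_self, zero_add] at this
  linear_combination this

lemma th34 (τ : ℂ) (hτ : 0 < τ.im) : jacobiTheta₂ 0 τ * jacobiTheta₂ (1 / 2) τ = jacobiTheta₂ (1 / 2) (2 * τ) ^ 2 := by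
  have := theta_mul 0 (1 / 2) τ hτ
  simp only [zero_add] at this
  rw [theta_zero, zero_sub, ← neg_div, ← half_add_one] at this
  linear_combination this

lemma theta_T (z τ : ℂ) : jacobiTheta₂ z (τ + 1) = jacobiTheta₂ (z + 1 / 2) τ := by
  refine tsum_congr (fun n => ?_)
  simp only [jacobiTheta₂_term]
  rw [Complex.exp_eq_exp_iff_exists_int]
  obtain ⟨k, hk⟩ := Int.even_mul_succ_self n
  have hk' : (n : ℂ) * (n + 1) = k + k := by exact_mod_cast hk
  refine ⟨k - n, ?_⟩
  push_cast
  linear_combination (Real.pi * Complex.I) * hk'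

lemma theta_S_sq (z τ : ℂ) (hτ : 0 < τ.im) :
    (-Complex.I * τ) * jacobiTheta₂ z τ ^ 2 = Complex.exp (-2 * Real.pi * Complex.I * z ^ 2 / τ) * jacobiTheta₂ (z / τ) (-1 / τ) ^ 2 := by
  have h := jacobiTheta₂_functional_equation z τ
  have t0 : τ ≠ 0 := by rintro rfl; simp at hτ
  have n0 : (-Complex.I * τ) ≠ 0 := by simp [t0]
  have e1 : ((-Complex.I * τ) ^ (1 / 2 : ℂ)) ^ 2 = -Complex.I * τ := by
    rw [← Complex.cpow_nat_mul]; norm_num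
  have e2 : Complex.exp (-Real.pi * Complex.I * z ^ 2 / τ) ^ 2 = Complex.exp (-2 * Real.pi * Complex.I * z ^ 2 / τ) := by
    rw [← Complex.exp_nat_mul]; congr 1; push_cast; ring
  rw [h, mul_pow, mul_pow, div_pow, e1, e2]
  field_simp

lemma theta_real (z : ℂ) (hz : (starRingEnd ℂ) z = z) (t : ℝ) :
    ∃ r : ℝ, jacobiTheta₂ z (Complex.I * t) = r := by
  have h := jacobiTheta₂_conj z (Complex.I * t)
  rw [hz] at h
  have e : -(starRingEnd ℂ) (Complex.I * t) = Complex.I * t := by simp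
  rw [e] at h
  obtain ⟨r, hr⟩ := Complex.conj_eq_iff_real.mp h
  exact ⟨r, hr⟩

lemma theta_ne (t : ℝ) (ht : 0 < t) : jacobiTheta₂ 0 (Complex.I * t) ≠ 0 := by
  have hτ : 0 < (Complex.I * t).im := by simpa using ht
  have h := hasSum_jacobiTheta₂_term 0 hτ
  have e : ∀ n : ℤ, jacobiTheta₂_term n 0 (Complex.I * t) = ((Real.exp (-Real.pi * n ^ 2 * t) : ℝ) : ℂ) := by
    intro n
    rw [jacobiTheta₂_term, Complex.ofReal_exp]
    congr 1
    push_cast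
    linear_combination (Real.pi * n ^ 2 * t) * Complex.I_sq
  simp only [e] at h
  intro h0
  rw [h0, show (0 : ℂ) = ((0 : ℝ) : ℂ) by simp, Complex.hasSum_ofReal] at h
  have h2 := le_hasSum h 0 (fun j _ => (Real.exp_pos _).le)
  simp at h2
  linarith

lemma cm_seven : 16 * jacobiTheta₂ (1 / 2) (Complex.I * (√7 : ℝ)) ^ 4 =
    (8 + 3 * (√7 : ℝ)) * jacobiTheta₂ 0 (Complex.I * (√7 : ℝ)) ^ 4 := by
  have h7 : (((√7 : ℝ)) : ℂ) ^ 2 = 7 := by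
    rw [← Complex.ofReal_pow]; norm_num
  have h70 : 0 < √7 := by positivity
  have ha0 := theta_ne (√7) h70
  set r : ℂ := ((√7 : ℝ) : ℂ) with hr
  set a := jacobiTheta₂ 0 (Complex.I * r) with ha
  set b := jacobiTheta₂ (1 / 2) (Complex.I * r) with hb
  set α : ℂ := (1 + Complex.I * r) / 2 with hα
  have him : α.im = √7 / 2 := by simp [hα, hr]
  have hαp : 0 < α.im := by rw [him]; positivity
  have e1 : jacobiTheta₂ 0 (2 * α) = b := by
    rw [show 2 * α = Complex.I * r + 1 by rw [hα]; ring, theta_T, zero_add]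
  have e2 : jacobiTheta₂ (1 / 2) (2 * α) = a := by
    rw [show 2 * α = Complex.I * r + 1 by rw [hα]; ring, theta_T, ha, ← jacobiTheta₂_add_left 0]
    congr 1; norm_num
  have i1 := th3_sq α hαp
  have i2 := th4_sq α hαp
  have i3 := th34 α hαp
  rw [e1] at i1 i2
  rw [e2] at i3
  set A := jacobiTheta₂ 0 α
  set B := jacobiTheta₂ (1 / 2) α
  have hσ : 0 < (α / 2).im := by simpa using hαp
  have j1 := th3_sq (α / 2) hσ
  have j2 := th4_sq (α / 2) hσ
  have j3 := th34 (α / 2) hσ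
  rw [show 2 * (α / 2) = α by ring] at j1 j2 j3
  have hα1 : 0 < (α - 1).im := by simpa using hαp
  have hne : α - 1 ≠ 0 := by intro h; rw [h] at hα1; simp at hα1
  have s := theta_S_sq 0 (α - 1) hα1
  have e3 : jacobiTheta₂ 0 (α - 1) = B := by
    have := theta_T (1 / 2) (α - 1)
    rw [sub_add_cancel] at this
    show _ = jacobiTheta₂ (1 / 2) α
    rw [this, ← jacobiTheta₂_add_left 0]
    congr 1; norm_num
  have e4 : -1 / (α - 1) = α / 2 := by
    rw [div_eq_div_iff hne (by norm_num), hα]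
    linear_combination (-(r ^ 2) / 4) * Complex.I_sq + (1 / 4) * h7
  rw [e3, e4] at s
  simp only [zero_div, ne_eq, OfNat.ofNat_ne_zero, not_false_eq_true, zero_pow, mul_zero, Complex.exp_zero, one_mul] at s
  set F := jacobiTheta₂ 0 (α / 2)
  set G := jacobiTheta₂ (1 / 2) (α / 2)
  have hc : -Complex.I * (α - 1) = (r + Complex.I) / 2 := by
    rw [hα]; linear_combination (-r / 2) * Complex.I_sq
  rw [hc] at s
  have hA0 : A ≠ 0 := by
    intro h; rw [h, zero_mul] at i3
    exact ha0 (by simpa using i3.symm)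
  have hB0 : B ≠ 0 := by
    intro h; rw [h, mul_zero] at i3
    exact ha0 (by simpa using i3.symm)
  have k1 : F ^ 2 + G ^ 2 = 2 * A ^ 2 := by linear_combination j1 + j2
  have k2 : (r + Complex.I) / 2 * G ^ 2 = B ^ 2 := by
    have : B ^ 2 * ((r + Complex.I) / 2 * G ^ 2) = B ^ 2 * B ^ 2 := by
      linear_combination G ^ 2 * s + (F * G + B ^ 2) * j3
    exact mul_left_cancel₀ (pow_ne_zero 2 hB0) this
  have k3 : A ^ 2 = (3 * r + Complex.I) / 8 * B ^ 2 := by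
    have k4 : G ^ 2 = (r - Complex.I) / 4 * B ^ 2 := by
      linear_combination (r - Complex.I) / 4 * k2 - G ^ 2 / 8 * h7 + G ^ 2 / 8 * Complex.I_sq
    linear_combination (-1 / 2) * k1 - (1 / 2) * s + (1 / 2) * k4
  have k5 : A ^ 2 + B ^ 2 = 2 * b ^ 2 := by linear_combination i1 + i2
  have k6 : A ^ 4 + B ^ 4 = (3 * r / 4) * (A * B) ^ 2 := by
    have : A ^ 4 = (A ^ 2) ^ 2 := by ring
    rw [this, mul_pow, k3]
    linear_combination (-9 / 64 * B ^ 4) * h7 + B ^ 4 / 64 * Complex.I_sq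
  have k7 : (A * B) ^ 2 = a ^ 4 := by rw [i3]; ring
  linear_combination (-4) * (A ^ 2 + B ^ 2 + 2 * b ^ 2) * k5 + 4 * k6 + (3 * r + 8) * k7

lemma kappa_rel : ∃ ar : ℝ, 0 < ar ∧ jacobiTheta₂ 0 (Complex.I * (√7 : ℝ)) ^ 2 = (ar : ℂ) ∧
    jacobiTheta₂ (1 / 2) (Complex.I * (√7 : ℝ)) ^ 2 = ((√2 * (3 + √7) / 8 * ar : ℝ) : ℂ) := by
  obtain ⟨x, hx⟩ := theta_real 0 (by simp) (√7)
  obtain ⟨y, hy⟩ := theta_real (1 / 2) (by rw [map_div₀, map_one, Complex.conj_ofNat]) (√7)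
  have h0 := theta_ne (√7) (by positivity)
  have h := cm_seven
  rw [hx] at h0 h ⊢
  rw [hy] at h ⊢
  have hx0 : x ≠ 0 := by exact_mod_cast h0
  have h' : 16 * y ^ 4 = (8 + 3 * √7) * x ^ 4 := by exact_mod_cast h
  refine ⟨x ^ 2, by positivity, by push_cast; rfl, ?_⟩
  rw [← Complex.ofReal_pow]
  congr 1
  have h2 : √2 ^ 2 = 2 := by norm_num
  have h7 : √7 ^ 2 = 7 := by norm_num
  apply (sq_eq_sq₀ (by positivity) (by positivity)).mp
  have e : (√2 * (3 + √7) / 8 * x ^ 2) ^ 2 = (√2 ^ 2 * (9 + 6 * √7 + √7 ^ 2) / 64) * x ^ 4 := by ring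
  rw [e, h2, h7]
  linear_combination (1 / 16) * h'

lemma theta_eighth : 
    jacobiTheta₂ (1 / 8) (Complex.I * (√7 : ℝ) / 4) + jacobiTheta₂ (5 / 8) (Complex.I * (√7 : ℝ) / 4) ≠ 0 ∧
    (jacobiTheta₂ (1 / 8) (Complex.I * (√7 : ℝ) / 4) - jacobiTheta₂ (5 / 8) (Complex.I * (√7 : ℝ) / 4)) ^ 4 * ((1 + √2 * (3 + √7) / 8 : ℝ) : ℂ) =
    (jacobiTheta₂ (1 / 8) (Complex.I * (√7 : ℝ) / 4) + jacobiTheta₂ (5 / 8) (Complex.I * (√7 : ℝ) / 4)) ^ 4 * ((1 - √2 * (3 + √7) / 8 : ℝ) : ℂ) := by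
  obtain ⟨ar, har, h3, h4⟩ := kappa_rel
  set κ : ℝ := √2 * (3 + √7) / 8 with hκ
  have κ0 : 0 < κ := by positivity
  set τ : ℂ := Complex.I * (√7 : ℝ) with hτd
  have hτ : 0 < τ.im := by simp [hτd]
  have hτ4 : 0 < (τ / 4).im := by simp [hτd]
  have s1 := theta_split (1 / 8) (τ / 4) hτ4
  have s2 := theta_split (5 / 8) (τ / 4) hτ4
  have m1 : jacobiTheta₂ (2 * (1 / 8)) (4 * (τ / 4)) = jacobiTheta₂ (1 / 4) τ := by
    congr 1 <;> ring
  have m2 : jacobiTheta₂ (2 * (5 / 8)) (4 * (τ / 4)) = jacobiTheta₂ (1 / 4) τ := by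
    rw [← jacobiTheta₂_add_left (1 / 4)]; congr 1 <;> ring
  have m3 : jacobiTheta₂ (2 * (1 / 8) + 2 * (τ / 4)) (4 * (τ / 4)) = jacobiTheta₂ (1 / 4 + τ / 2) τ := by
    congr 1 <;> ring
  have m4 : jacobiTheta₂ (2 * (5 / 8) + 2 * (τ / 4)) (4 * (τ / 4)) = jacobiTheta₂ (1 / 4 + τ / 2) τ := by
    rw [← jacobiTheta₂_add_left (1 / 4 + τ / 2)]; congr 1 <;> ring
  have m5 : Complex.exp (2 * Real.pi * Complex.I * (5 / 8) + Real.pi * Complex.I * (τ / 4)) =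
      - Complex.exp (2 * Real.pi * Complex.I * (1 / 8) + Real.pi * Complex.I * (τ / 4)) := by
    rw [show (2 * Real.pi * Complex.I * (5 / 8) + Real.pi * Complex.I * (τ / 4) : ℂ) =
      (2 * Real.pi * Complex.I * (1 / 8) + Real.pi * Complex.I * (τ / 4)) + Real.pi * Complex.I by ring,
      Complex.exp_add _ (Real.pi * Complex.I), Complex.exp_pi_mul_I]; ring
  rw [m1, m3] at s1
  rw [m2, m4, m5] at s2
  set E := Complex.exp (2 * Real.pi * Complex.I * (1 / 8) + Real.pi * Complex.I * (τ / 4)) with hE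
  set U := jacobiTheta₂ (1 / 4) τ
  set V := jacobiTheta₂ (1 / 4 + τ / 2) τ
  have u := theta_mul (1 / 4) (1 / 4) τ hτ
  rw [sub_self, zero_add, show (1 / 4 + 1 / 4 : ℂ) = 1 / 2 by norm_num, theta_zero, zero_mul, mul_zero, add_zero] at u
  have v := theta_mul (1 / 4 + τ / 2) (1 / 4 + τ / 2) τ hτ
  rw [sub_self, zero_add, show (1 / 4 + τ / 2 + (1 / 4 + τ / 2) : ℂ) = 1 / 2 + τ by ring, theta_zero, zero_mul, zero_add,
    show (1 / 2 + τ + τ : ℂ) = 1 / 2 + 2 * τ by ring, jacobiTheta₂_add_left'] at v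
  set g := jacobiTheta₂ (1 / 2) (2 * τ) with hg
  set h := jacobiTheta₂ 0 (2 * τ) with hh
  set l := jacobiTheta₂ τ (2 * τ) with hl
  set ε := Complex.exp (Real.pi * Complex.I * (τ / 2)) with hε
  have w : (E * V) ^ 2 = ε * g * l := by
    have : (E * V) ^ 2 = (E ^ 2 * Complex.exp (2 * Real.pi * Complex.I * (1 / 4 + τ / 2) + Real.pi * Complex.I * τ) *
      Complex.exp (-Real.pi * Complex.I * (2 * τ + 2 * (1 / 2)))) * (g * l) := by
      linear_combination E ^ 2 * v
    rw [this, hE, ← Complex.exp_nat_mul, ← Complex.exp_add, ← Complex.exp_add, hε, mul_assoc _ g l]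
    congr 2
    push_cast
    ring
  have n3 := th3_sq τ hτ
  have n4 := th4_sq τ hτ
  have n34 := th34 τ hτ
  rw [h3] at n3
  rw [h4] at n4
  have hε2 : Complex.exp (Real.pi * Complex.I * τ) = ε ^ 2 := by
    rw [hε, ← Complex.exp_nat_mul]; congr 1; push_cast; ring
  rw [hε2] at n3 n4
  have ar0 : (ar : ℂ) ≠ 0 := by exact_mod_cast har.ne'
  have κc : (κ : ℂ) ≠ 0 := by exact_mod_cast κ0.ne'
  have κc1 : (1 + κ : ℂ) ≠ 0 := by
    have : (1 + κ : ℝ) ≠ 0 := by positivity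
    exact_mod_cast this
  push_cast at n4 ⊢
  have p1 : 2 * h ^ 2 = (1 + κ) * ar := by linear_combination -n3 - n4
  have p2 : 2 * (ε ^ 2 * l ^ 2) = (1 - κ) * ar := by linear_combination -n3 + n4
  have h0 : h ≠ 0 := by
    intro h0
    rw [h0] at p1
    have : (1 + κ) * ar = (0 : ℂ) := by rw [← p1]; ring
    exact mul_ne_zero κc1 ar0 this
  have g0 : g ≠ 0 := by
    intro h0
    rw [← hg, h0] at n34
    have : (κ * ar) * ar = (0 : ℂ) := by
      push_cast at h4
      rw [← h4, ← h3]
      linear_combination (jacobiTheta₂ 0 τ * jacobiTheta₂ (1 / 2) τ) * n34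
    exact mul_ne_zero (mul_ne_zero κc ar0) ar0 this
  have U0 : U ≠ 0 := by
    intro h0'
    change U * U = _ at u
    rw [h0', zero_mul] at u
    exact mul_ne_zero g0 h0 u.symm
  have sum : jacobiTheta₂ (1 / 8) (τ / 4) + jacobiTheta₂ (5 / 8) (τ / 4) = 2 * U := by
    linear_combination s1 + s2
  have dif : jacobiTheta₂ (1 / 8) (τ / 4) - jacobiTheta₂ (5 / 8) (τ / 4) = 2 * (E * V) := by
    linear_combination s1 - s2
  rw [sum, dif]
  refine ⟨mul_ne_zero two_ne_zero U0, ?_⟩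
  have U4 : U ^ 4 = g ^ 2 * h ^ 2 := by linear_combination (U * U + g * h) * u
  have V4 : (E * V) ^ 4 = ε ^ 2 * g ^ 2 * l ^ 2 := by linear_combination ((E * V) ^ 2 + ε * g * l) * w
  rw [mul_pow, mul_pow 2 U, U4, V4]
  have : (ar : ℂ) * ((2 ^ 4 * (ε ^ 2 * g ^ 2 * l ^ 2)) * (1 + κ)) = ar * (2 ^ 4 * (g ^ 2 * h ^ 2) * (1 - κ)) := by
    linear_combination (-2 ^ 4 * (ε ^ 2 * g ^ 2 * l ^ 2)) * p1 + (2 ^ 4 * g ^ 2 * h ^ 2) * p2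
  exact mul_left_cancel₀ ar0 this

lemma log_series (X : ℝ) (h0 : 0 < X) (h1 : X < 1) :
    HasSum (fun n : ℤ => (-1 : ℝ) ^ n * X ^ ((4 * n + 1 : ℤ).natAbs) / ((4 * n + 1 : ℤ).natAbs : ℝ))
      (1 / (2 * √2) * Real.log ((1 + √2 * X + X ^ 2) / (1 - √2 * X + X ^ 2))) := by
  set w : ℂ := X * Complex.exp ((Real.pi / 4 : ℝ) * Complex.I) with hw
  have hs2 : √2 ^ 2 = 2 := by norm_num
  have hwn : ‖w‖ < 1 := by
    rw [hw, norm_mul, Complex.norm_exp_ofReal_mul_I]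
    simp [abs_of_pos h0, h1]
  have wre : w.re = X * (√2 / 2) := by
    rw [hw, Complex.re_ofReal_mul, Complex.exp_ofReal_mul_I_re, Real.cos_pi_div_four]
  have wim : w.im = X * (√2 / 2) := by
    rw [hw, Complex.im_ofReal_mul, Complex.exp_ofReal_mul_I_im, Real.sin_pi_div_four]
  have n1 : 2 * Real.log ‖1 + w‖ = Real.log (1 + √2 * X + X ^ 2) := by
    have : 1 + √2 * X + X ^ 2 = ‖1 + w‖ ^ 2 := by
      rw [Complex.sq_norm, Complex.normSq_apply]
      simp only [Complex.add_re, Complex.add_im, Complex.one_re, Complex.one_im, wre, wim]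
      linear_combination (-X ^ 2 / 2) * hs2
    rw [this, Real.log_pow]; norm_num
  have n2 : 2 * Real.log ‖1 - w‖ = Real.log (1 - √2 * X + X ^ 2) := by
    have : 1 - √2 * X + X ^ 2 = ‖1 - w‖ ^ 2 := by
      rw [Complex.sq_norm, Complex.normSq_apply]
      simp only [Complex.sub_re, Complex.sub_im, Complex.one_re, Complex.one_im, wre, wim]
      linear_combination (-X ^ 2 / 2) * hs2
    rw [this, Real.log_pow]; norm_num
  have a1 := Complex.hasSum_taylorSeries_neg_log hwn
  have a2 := Complex.hasSum_taylorSeries_neg_log (z := -w) (by rwa [norm_neg])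
  have a3 := Complex.hasSum_re (a1.sub a2)
  have d1 : 0 < 1 + √2 * X + X ^ 2 := by positivity
  have d2 : 0 < 1 - √2 * X + X ^ 2 := by nlinarith [sq_nonneg (1 - √2 / 2 * X), sq_nonneg X]
  have hval : (-Complex.log (1 - w) - -Complex.log (1 - -w)).re = 1 / 2 * Real.log ((1 + √2 * X + X ^ 2) / (1 - √2 * X + X ^ 2)) := by
    rw [Real.log_div d1.ne' d2.ne', ← n1, ← n2]
    simp only [sub_neg_eq_add, Complex.add_re, Complex.neg_re, Complex.log_re]
    ring
  rw [hval] at a3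
  have hinj : Function.Injective (fun n : ℤ => (4 * n + 1 : ℤ).natAbs) := by
    intro a b h
    simp only at h
    omega
  rw [← hinj.hasSum_iff] at a3
  · refine hs_conv (a3.mul_left (1 / √2)) (fun n => ?_) (by ring)
    simp only [Function.comp]
    set j := (4 * n + 1 : ℤ).natAbs with hj
    have hodd : Odd j := by
      rw [hj, Int.natAbs_odd]; exact ⟨2 * n, by ring⟩
    have hj0 : (j : ℝ) ≠ 0 := by
      have : j ≠ 0 := by omega
      exact_mod_cast this
    have hwj : (w ^ j).re = X ^ j * ((-1) ^ n * (√2 / 2)) := by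
      rw [hw, mul_pow, ← Complex.exp_nat_mul, ← Complex.ofReal_pow, Complex.re_ofReal_mul,
        show ((j : ℂ) * ((Real.pi / 4 : ℝ) * Complex.I)) = ((j * (Real.pi / 4) : ℝ) : ℂ) * Complex.I by push_cast; ring,
        Complex.exp_ofReal_mul_I_re, ← Real.cos_pi_div_four, ← Real.cos_add_int_mul_pi]
      congr 1
      rw [hj, Nat.cast_natAbs]
      rcases abs_cases (4 * n + 1) with ⟨h, _⟩ | ⟨h, _⟩
      · rw [h]; congr 1; push_cast; ring
      · rw [h, ← Real.cos_neg]; congr 1; push_cast; ring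
    rw [hodd.neg_pow, show w ^ j / (j : ℂ) - -w ^ j / (j : ℂ) = ((2 / j : ℝ) : ℂ) * w ^ j by push_cast; ring,
      Complex.re_ofReal_mul, hwj]
    field_simp
  · intro j hj
    have he : Even j := by
      by_contra hne
      rw [Nat.not_even_iff] at hne
      apply hj
      by_cases h4 : j % 4 = 1
      · exact ⟨(j / 4 : ℕ), by simp only; omega⟩
      · exact ⟨-(((j + 1) / 4 : ℕ) : ℤ), by simp only; omega⟩
    rw [he.neg_pow]
    simp

lemma geom_odd (c s : ℝ) (h : 0 < c * s) : HasSum (fun k : ℕ => 2 * Real.exp (-(c * s)) ^ (2 * k + 1)) (1 / Real.sinh (c * s)) := by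
  set u := Real.exp (-(c * s)) with hu
  have u0 : 0 < u := Real.exp_pos _
  have u1 : u < 1 := by rw [hu, Real.exp_lt_one_iff]; linarith
  have u2 : u ^ 2 < 1 := by nlinarith
  have g := (hasSum_geometric_of_lt_one (sq_nonneg u) u2).mul_left (2 * u)
  refine hs_conv g (fun k => by rw [pow_succ, pow_mul]; ring) ?_
  rw [Real.sinh_eq, ← hu, show Real.exp (c * s) = u⁻¹ by rw [hu, Real.exp_neg, inv_inv]]
  have : 1 - u ^ 2 ≠ 0 := by linarith
  field_simp

lemma natAbs_pos' (n : ℤ) : 1 ≤ (4 * n + 1 : ℤ).natAbs := by omega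

lemma double_sum (c : ℝ) (hc : 0 < c) : ∃ T : ℝ,
    HasSum (fun n : ℤ => (-1 : ℝ) ^ n / (((4 * n + 1 : ℤ).natAbs : ℝ) * Real.sinh (c * ((4 * n + 1 : ℤ).natAbs : ℝ)))) T ∧
    HasSum (fun k : ℕ => 1 / √2 * Real.log ((1 + √2 * Real.exp (-c) ^ (2 * k + 1) + (Real.exp (-c) ^ (2 * k + 1)) ^ 2) /
      (1 - √2 * Real.exp (-c) ^ (2 * k + 1) + (Real.exp (-c) ^ (2 * k + 1)) ^ 2))) T := by
  set y := Real.exp (-c) with hy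
  have y0 : 0 < y := Real.exp_pos _
  have y1 : y < 1 := by rw [hy, Real.exp_lt_one_iff]; linarith
  set f : ℤ × ℕ → ℝ := fun x => 2 * ((-1) ^ x.1 * (y ^ (2 * x.2 + 1)) ^ ((4 * x.1 + 1 : ℤ).natAbs) / ((4 * x.1 + 1 : ℤ).natAbs : ℝ)) with hf
  have hinj : Function.Injective (fun n : ℤ => (4 * n + 1 : ℤ).natAbs) := by
    intro a b h
    simp only at h
    omega
  have s1 : Summable (fun n : ℤ => y ^ ((4 * n + 1 : ℤ).natAbs)) :=
    (summable_geometric_of_lt_one y0.le y1).comp_injective hinj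
  have s2 : Summable (fun k : ℕ => 2 * y ^ k) := (summable_geometric_of_lt_one y0.le y1).mul_left 2
  have s3 : Summable (fun x : ℤ × ℕ => y ^ ((4 * x.1 + 1 : ℤ).natAbs) * (2 * y ^ x.2)) :=
    s1.mul_of_nonneg s2 (fun _ => by positivity) (fun _ => by positivity)
  have sf : Summable f := by
    refine Summable.of_norm_bounded s3 ?_
    rintro ⟨n, k⟩
    have hn := natAbs_pos' n
    simp only [hf]
    set s := (4 * n + 1 : ℤ).natAbs
    have hs1 : (1 : ℝ) ≤ s := by exact_mod_cast hn
    rw [norm_mul, norm_div, norm_mul, norm_zpow, norm_neg, norm_one, one_zpow, one_mul, ← pow_mul, norm_pow,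
      Real.norm_of_nonneg y0.le, Real.norm_of_nonneg (by positivity : (0 : ℝ) ≤ s), Real.norm_of_nonneg (by norm_num : (0 : ℝ) ≤ 2)]
    calc 2 * (y ^ ((2 * k + 1) * s) / s) ≤ 2 * y ^ ((2 * k + 1) * s) := by
          gcongr
          exact div_le_self (by positivity) hs1
      _ ≤ 2 * y ^ (s + k) := by
          gcongr 2 * ?_
          apply pow_le_pow_of_le_one y0.le y1.le
          nlinarith
      _ = _ := by rw [pow_add]; ring
  refine ⟨∑' x, f x, ?_, ?_⟩
  · refine sf.hasSum.prod_fiberwise (fun n => ?_)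
    have hn := natAbs_pos' n
    simp only [hf]
    set s := (4 * n + 1 : ℤ).natAbs
    have hs0 : (0 : ℝ) < s := by exact_mod_cast hn
    refine hs_conv ((geom_odd c s (by positivity)).mul_left ((-1 : ℝ) ^ n / (s : ℝ))) (fun k => ?_) ?_
    · rw [show Real.exp (-(c * s)) = y ^ s by rw [hy, ← Real.exp_nat_mul]; congr 1; ring, ← pow_mul, ← pow_mul, mul_comm s]
      ring
    · field_simp
  · have sw : HasSum (fun x : ℕ × ℤ => f x.swap) (∑' x, f x) :=
      (Equiv.prodComm ℕ ℤ).hasSum_iff.mpr sf.hasSum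
    refine sw.prod_fiberwise (fun k => ?_)
    have hX : y ^ (2 * k + 1) < 1 := pow_lt_one₀ y0.le y1 (by omega)
    refine hs_conv ((log_series (y ^ (2 * k + 1)) (by positivity) hX).mul_left 2) (fun n => ?_) ?_
    · simp [hf, Prod.swap]
    · field_simp

lemma den_pos (Q : ℝ) : 0 < 1 - √2 * Q + Q ^ 2 := by
  have hs2 : √2 ^ 2 = 2 := by norm_num
  nlinarith [sq_nonneg (1 - √2 / 2 * Q), sq_nonneg (√2 - 2 * Q), sq_nonneg Q]

lemma exp_eighth : Complex.exp (2 * Real.pi * Complex.I * (1 / 8)) + (Complex.exp (2 * Real.pi * Complex.I * (1 / 8)))⁻¹ = ((√2 : ℝ) : ℂ) := by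
  rw [← Complex.exp_neg, show 2 * (Real.pi : ℂ) * Complex.I * (1 / 8) = ((Real.pi / 4 : ℝ) : ℂ) * Complex.I by push_cast; ring,
    show -(((Real.pi / 4 : ℝ) : ℂ) * Complex.I) = (-((Real.pi / 4 : ℝ) : ℂ)) * Complex.I by ring,
    ← Complex.two_cos, ← Complex.ofReal_cos, Real.cos_pi_div_four]
  push_cast
  ring

lemma exp_five_eighth : Complex.exp (2 * Real.pi * Complex.I * (5 / 8)) = -Complex.exp (2 * Real.pi * Complex.I * (1 / 8)) := by
  rw [show 2 * (Real.pi : ℂ) * Complex.I * (5 / 8) = 2 * Real.pi * Complex.I * (1 / 8) + Real.pi * Complex.I by ring,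
    Complex.exp_add, Complex.exp_pi_mul_I]
  ring

lemma theta_ratio (T : ℝ)
    (hT : HasSum (fun k : ℕ => 1 / √2 * Real.log ((1 + √2 * Real.exp (-(Real.pi * √7 / 4)) ^ (2 * k + 1) + (Real.exp (-(Real.pi * √7 / 4)) ^ (2 * k + 1)) ^ 2) /
      (1 - √2 * Real.exp (-(Real.pi * √7 / 4)) ^ (2 * k + 1) + (Real.exp (-(Real.pi * √7 / 4)) ^ (2 * k + 1)) ^ 2))) T) :
    jacobiTheta₂ (1 / 8) (Complex.I * (√7 : ℝ) / 4) = (Real.exp (√2 * T) : ℝ) * jacobiTheta₂ (5 / 8) (Complex.I * (√7 : ℝ) / 4) := by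
  set y := Real.exp (-(Real.pi * √7 / 4)) with hy
  have y0 : 0 < y := Real.exp_pos _
  have h7 : 0 < √7 := by positivity
  have hτ : 0 < (Complex.I * (√7 : ℝ) / 4 : ℂ).im := by
    have : (Complex.I * (√7 : ℝ) / 4 : ℂ) = ((√7 / 4 : ℝ) : ℂ) * Complex.I := by push_cast; ring
    rw [this]
    simp
  have hE : Complex.exp (Real.pi * Complex.I * (Complex.I * (√7 : ℝ) / 4)) = (y : ℂ) := by
    rw [hy, Complex.ofReal_exp]
    congr 1
    push_cast
    linear_combination ((Real.pi : ℂ) * (√7 : ℝ) / 4) * Complex.I_sq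
  obtain ⟨c, hc, hlim⟩ := tendsto_triple _ hτ
  have l1 := hlim (1 / 8)
  have l5 := hlim (5 / 8)
  rw [hE] at l1 l5
  rw [exp_five_eighth] at l5
  have hx := exp_eighth
  have hx0 := Complex.exp_ne_zero (2 * Real.pi * Complex.I * (1 / 8))
  set x := Complex.exp (2 * Real.pi * Complex.I * (1 / 8))
  have hxx : x * x⁻¹ = 1 := mul_inv_cancel₀ hx0
  have hR : Tendsto (fun K : ℕ => ((Real.exp (√2 * ∑ k ∈ Finset.range K, (1 / √2 * Real.log ((1 + √2 * y ^ (2 * k + 1) + (y ^ (2 * k + 1)) ^ 2) /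
      (1 - √2 * y ^ (2 * k + 1) + (y ^ (2 * k + 1)) ^ 2)))) : ℝ) : ℂ)) atTop (nhds ((Real.exp (√2 * T) : ℝ) : ℂ)) :=
    (Complex.continuous_ofReal.tendsto _).comp ((Real.continuous_exp.tendsto _).comp (hT.tendsto_sum_nat.const_mul √2))
  have l := hR.mul l5
  have key := tendsto_nhds_unique l1 (l.congr (fun K => ?_))
  · have : c * (jacobiTheta₂ (1 / 8) (Complex.I * (√7 : ℝ) / 4)) = c * ((Real.exp (√2 * T) : ℝ) * jacobiTheta₂ (5 / 8) (Complex.I * (√7 : ℝ) / 4)) := by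
      rw [key]; ring
    exact mul_left_cancel₀ hc this
  · rw [Finset.mul_sum, Real.exp_sum, Complex.ofReal_prod, ← Finset.prod_mul_distrib]
    refine Finset.prod_congr rfl (fun k _ => ?_)
    set Q := y ^ (2 * k + 1) with hQ
    have Q0 : 0 < Q := by positivity
    have d2 := den_pos Q
    have d1 : 0 < 1 + √2 * Q + Q ^ 2 := by positivity
    have hQc : (y : ℂ) ^ (2 * k + 1) = (Q : ℂ) := by rw [hQ]; push_cast; rfl
    have hs : √2 ≠ 0 := by positivity
    rw [show √2 * (1 / √2 * Real.log ((1 + √2 * Q + Q ^ 2) / (1 - √2 * Q + Q ^ 2))) = Real.log ((1 + √2 * Q + Q ^ 2) / (1 - √2 * Q + Q ^ 2)) by field_simp,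
      Real.exp_log (by positivity), hQc]
    have e1 : (1 + x * (Q : ℂ)) * (1 + x⁻¹ * Q) = ((1 + √2 * Q + Q ^ 2 : ℝ) : ℂ) := by
      push_cast
      linear_combination (Q : ℂ) * hx + (Q : ℂ) ^ 2 * hxx
    have e2 : (1 + -x * (Q : ℂ)) * (1 + (-x)⁻¹ * Q) = ((1 - √2 * Q + Q ^ 2 : ℝ) : ℂ) := by
      rw [inv_neg]
      push_cast
      linear_combination -(Q : ℂ) * hx + (Q : ℂ) ^ 2 * hxx
    rw [e1, e2, ← Complex.ofReal_mul, div_mul_cancel₀ _ d2.ne']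

lemma tendsto_Ioo_finset : Tendsto (fun N : ℕ => Finset.Ioo (-(N : ℤ)) (N : ℤ)) atTop atTop := by
  refine tendsto_atTop_finset_of_monotone ?_ ?_
  · intro a b h x hx
    rw [Finset.mem_Ioo] at *
    omega
  · intro x
    exact ⟨x.natAbs + 1, by rw [Finset.mem_Ioo]; omega⟩

lemma exp_value (T : ℝ)
    (hT : HasSum (fun k : ℕ => 1 / √2 * Real.log ((1 + √2 * Real.exp (-(Real.pi * √7 / 4)) ^ (2 * k + 1) + (Real.exp (-(Real.pi * √7 / 4)) ^ (2 * k + 1)) ^ 2) /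
      (1 - √2 * Real.exp (-(Real.pi * √7 / 4)) ^ (2 * k + 1) + (Real.exp (-(Real.pi * √7 / 4)) ^ (2 * k + 1)) ^ 2))) T) :
    Real.exp (√2 * T) = (1 + (√2 - 1) * √(2 * √2 - √7)) / (1 - (√2 - 1) * √(2 * √2 - √7)) := by
  have hXY := theta_ratio T hT
  have hT0 : 0 ≤ T := by
    refine hT.nonneg (fun k => ?_)
    set Q := Real.exp (-(Real.pi * √7 / 4)) ^ (2 * k + 1) with hQ
    have Q0 : 0 < Q := by positivity
    refine mul_nonneg (by positivity) (Real.log_nonneg ?_)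
    rw [le_div_iff₀ (den_pos Q)]
    have : 0 ≤ √2 * Q := by positivity
    linarith
  obtain ⟨hne, h4⟩ := theta_eighth
  have P1 : 1 ≤ Real.exp (√2 * T) := Real.one_le_exp (by positivity)
  set P := Real.exp (√2 * T)
  rw [hXY] at hne h4
  set Y := jacobiTheta₂ (5 / 8) (Complex.I * (√7 : ℝ) / 4)
  have hY : Y ≠ 0 := by rintro h; rw [h] at hne; simp at hne
  have hP : (P - 1) ^ 4 * (1 + √2 * (3 + √7) / 8) = (P + 1) ^ 4 * (1 - √2 * (3 + √7) / 8) := by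
    have : (((P - 1) ^ 4 * (1 + √2 * (3 + √7) / 8) : ℝ) : ℂ) = (((P + 1) ^ 4 * (1 - √2 * (3 + √7) / 8) : ℝ) : ℂ) := by
      apply mul_left_cancel₀ (pow_ne_zero 4 hY)
      push_cast at h4 ⊢
      linear_combination h4
    exact_mod_cast this
  have a2 : √2 ^ 2 = 2 := by norm_num
  have a7 : √7 ^ 2 = 7 := by norm_num
  have b2 : 1 < √2 := by nlinarith [Real.sqrt_nonneg 2]
  have b7 : √7 < 2 * √2 := by
    apply lt_of_pow_lt_pow_left₀ 2 (by positivity)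
    rw [mul_pow, a2, a7]; norm_num
  set r := √(2 * √2 - √7) with hr
  have hr2 : r ^ 2 = 2 * √2 - √7 := Real.sq_sqrt (by linarith)
  have hr0 : 0 ≤ r := Real.sqrt_nonneg _
  set t := (√2 - 1) * r with ht
  have ht0 : 0 ≤ t := mul_nonneg (by linarith) hr0
  have ht4 : t ^ 4 = (17 - 12 * √2) * (15 - 4 * √2 * √7) := by
    have e1 : (√2 - 1) ^ 4 = 17 - 12 * √2 := by
      linear_combination (√2 ^ 2 - 4 * √2 + 8) * a2
    have e2 : r ^ 4 = 15 - 4 * √2 * √7 := by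
      rw [show r ^ 4 = (r ^ 2) ^ 2 by ring, hr2]
      linear_combination 4 * a2 + a7
    rw [ht, mul_pow, e1, e2]
  have htk : t ^ 4 * (1 + √2 * (3 + √7) / 8) = 1 - √2 * (3 + √7) / 8 := by
    rw [ht4]
    linear_combination (48 * √7 * (1 + √2 * (3 + √7) / 8) - (180 + 68 * √7) * (3 + √7) / 8) * a2 + (12 * √2 - 17) * a7
  have hk : 0 < 1 + √2 * (3 + √7) / 8 := by positivity
  have h44 : (P - 1) ^ 4 = (t * (P + 1)) ^ 4 := by
    apply mul_right_cancel₀ hk.ne'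
    rw [hP, mul_pow, ← htk]; ring
  have hlin : P - 1 = t * (P + 1) :=
    (pow_left_inj₀ (by linarith) (by positivity) (by norm_num)).mp h44
  have ht1 : 1 - t ≠ 0 := by
    intro h
    have : t = 1 := by linarith
    rw [this] at hlin
    linarith
  rw [eq_div_iff ht1]
  linear_combination hlin

theorem F41_at_four_over_sqrt_seven :
    Tendsto (fun N : ℕ => ∑ n ∈ Finset.Ioo (-(N : ℤ)) (N : ℤ),
        ∑' m : ℤ, (-1 : ℝ) ^ (m + n) / ((4 * (m : ℝ)) ^ 2 + 7 * (4 * (n : ℝ) + 1) ^ 2))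
      atTop
      (nhds (Real.pi / (4 * Real.sqrt 14) *
        Real.log ((1 + (Real.sqrt 2 - 1) * Real.sqrt (2 * Real.sqrt 2 - Real.sqrt 7))
          / (1 - (Real.sqrt 2 - 1) * Real.sqrt (2 * Real.sqrt 2 - Real.sqrt 7))))) := by
  obtain ⟨T, hT1, hT2⟩ := double_sum (Real.pi * √7 / 4) (by positivity)
  rw [← exp_value T hT2, Real.log_exp]
  simp_rw [inner_sum_eq]
  have h := hT1.mul_left (Real.pi / (4 * √7))
  have e : Real.pi / (4 * √14) * (√2 * T) = Real.pi / (4 * √7) * T := by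
    rw [show (14 : ℝ) = 2 * 7 by norm_num, Real.sqrt_mul (by norm_num)]
    field_simp
  rw [e]
  rw [HasSum, SummationFilter.unconditional_filter] at h
  exact h.comp tendsto_Ioo_finset
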